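/- Let G be a finite simple graph, σ a linear order on V(G), and γ ≥ 1 an integer. Let 𝒱 be a collection of subsets of V(G) such that every V ∈ 𝒱 satisfies |V| ≤ γ and G[V] is connected. Write w = wcol_{2γ}(G,σ) and let p > 0. If B ⊆ V(G) is such that every vertex v ∈ B γ-witnesses (with respect to σ) at least ⌈(1+p)/p · w⌉ pairwise disjoint members of 𝒱, then |B| ≤ p·τ(𝒱), where τ(𝒱) is the minimum size of a hitting set of 𝒱. -/

import Mathlib

/-- `WR_r(G, σ, v)`: the set of vertices `u` reachable from `v` by a walk of
length at most `r` on which every vertex is `≤ u` in the order `σ`. -/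
def WR {α : Type} (G : SimpleGraph α) (σ : LinearOrder α) (r : ℕ) (v : α) : Set α :=
  {u | ∃ p : G.Walk v u, p.length ≤ r ∧ ∀ w ∈ p.support, σ.le w u}

/-- `wcol_r(G, σ)`: the weak `r`-coloring number of `G` under the order `σ`. -/
noncomputable def wcol {α : Type} [Fintype α] (G : SimpleGraph α)
    (σ : LinearOrder α) (r : ℕ) : ℕ :=
  Finset.univ.sup fun v => (WR G σ r v).ncard

/-- `N_G[V]`: the closed neighborhood of the vertex set `V` in `G`. -/
def closedNbhd {α : Type} (G : SimpleGraph α) (V : Finset α) : Set α :=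
  ↑V ∪ {u | ∃ x ∈ V, G.Adj u x}

/-- `v` `t`-witnesses `V` with respect to `σ`: some `u ∈ N_G[V]` has `v ∈ WR_t(G,σ,u)`. -/
def Witnesses {α : Type} (G : SimpleGraph α) (σ : LinearOrder α) (t : ℕ)
    (v : α) (V : Finset α) : Prop :=
  ∃ u ∈ closedNbhd G V, v ∈ WR G σ t u

/-- `τ(𝒱)`: the minimum size of a hitting set of `𝒱`. -/
noncomputable def tau {α : Type} [DecidableEq α] (𝒱 : Set (Finset α)) : ℕ :=
  sInf {n | ∃ S : Finset α, (∀ V ∈ 𝒱, (S ∩ V).Nonempty) ∧ S.card = n}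

theorem aux_max {α : Type} (σ : LinearOrder α) (l : List α) (h : l ≠ []) :
    ∃ m ∈ l, ∀ w ∈ l, σ.le w m := by
  letI := σ
  obtain ⟨a, ha⟩ := List.exists_mem_of_ne_nil l h
  obtain ⟨m, hm, h2⟩ := Finset.exists_max_image l.toFinset id ⟨a, by simpa using ha⟩
  exact ⟨m, by simpa using hm, fun w hw => h2 w (by simpa using hw)⟩

theorem aux_map {α : Type} (G : SimpleGraph α) (V : Finset α)
    {a b : (↑V : Set α)} (r : (G.induce (↑V : Set α)).Walk a b) :
    ∃ r' : G.Walk a.1 b.1, r'.length = r.length ∧ ∀ w ∈ r'.support, w ∈ V := by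
  induction r with
  | @nil a => exact ⟨SimpleGraph.Walk.nil, rfl, fun w hw => by
      rw [SimpleGraph.Walk.support_nil, List.mem_singleton] at hw
      subst hw; exact a.2⟩
  | @cons a b c h q ih =>
    obtain ⟨r', h1, h2⟩ := ih
    have h' : G.Adj a.1 b.1 := h
    refine ⟨SimpleGraph.Walk.cons h' r', by simp [h1], fun w hw => ?_⟩
    rw [SimpleGraph.Walk.support_cons, List.mem_cons] at hw
    rcases hw with rfl | hw
    · exact a.2
    · exact h2 w hw

theorem aux_wit {α : Type} [Fintype α] [DecidableEq α]
    (G : SimpleGraph α) (σ : LinearOrder α) (γ : ℕ)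
    (V : Finset α) (hsize : V.card ≤ γ) (hconn : (G.induce (↑V : Set α)).Connected)
    (v s : α) (hs : s ∈ V) (hw : Witnesses G σ γ v V) :
    v ∈ WR G σ (2 * γ) s ∨ ∃ m ∈ V, m ∈ WR G σ (2 * γ) v := by
  obtain ⟨u, hu, q, hq, hqs⟩ := hw
  have h1 : ∃ x ∈ V, ∃ q' : G.Walk x v, q'.length ≤ γ + 1 ∧
      ∀ w ∈ q'.support, w = x ∨ σ.le w v := by
    rcases hu with hu | ⟨x, hx, hadj⟩
    · exact ⟨u, hu, q, by omega, fun w hw => Or.inr (hqs w hw)⟩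
    · refine ⟨x, hx, SimpleGraph.Walk.cons hadj.symm q, by simpa using hq, ?_⟩
      intro w hw
      rw [SimpleGraph.Walk.support_cons, List.mem_cons] at hw
      exact hw.imp id (hqs w)
  obtain ⟨x, hx, q', hq', hqs'⟩ := h1
  obtain ⟨r0⟩ := hconn.preconnected ⟨s, hs⟩ ⟨x, hx⟩
  have hr : ∃ r : G.Walk s x, r.length + 1 ≤ γ ∧ ∀ w ∈ r.support, w ∈ V := by
    have := (r0.bypass_isPath).length_lt
    have h3 : Fintype.card (↑V : Set α) = V.card := by simp
    obtain ⟨r, hr1, hr2⟩ := aux_map G V r0.bypass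
    exact ⟨r, by omega, hr2⟩
  obtain ⟨r, hrl, hrs⟩ := hr
  obtain ⟨m, hm, hmax⟩ := aux_max σ (r.append q').support (by simp)
  have hlen : (r.append q').length ≤ 2 * γ := by
    rw [SimpleGraph.Walk.length_append]; omega
  by_cases hmV : m ∈ V
  · right
    refine ⟨m, hmV, ((r.append q').dropUntil m hm).reverse, ?_, ?_⟩
    · rw [SimpleGraph.Walk.length_reverse]
      exact ((r.append q').length_dropUntil_le hm).trans hlen
    · intro w hw
      rw [SimpleGraph.Walk.support_reverse, List.mem_reverse] at hw
      exact hmax w ((r.append q').support_dropUntil_subset hm hw)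
  · left
    have hmv : σ.le m v := by
      rcases (SimpleGraph.Walk.mem_support_append_iff _ _).1 hm with h | h
      · exact absurd (hrs m h) hmV
      · rcases hqs' m h with h | h
        · exact absurd (h ▸ hx) hmV
        · exact h
    exact ⟨r.append q', hlen, fun w hw => σ.le_trans _ _ _ (hmax w hw) hmv⟩

/-- let `𝒱` consist of subsets of `V(G)` of size at most `γ` inducing
connected subgraphs, write `w = wcol_{2γ}(G,σ)` and let `p > 0`.  If every vertex of
`B` `γ`-witnesses at least `⌈(1+p)/p · w⌉` pairwise disjoint members of `𝒱`, then
`|B| ≤ p·τ(𝒱)`. -/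
theorem stmt9 {α : Type} [Fintype α] [DecidableEq α]
    (G : SimpleGraph α) (σ : LinearOrder α) (γ : ℕ) (hγ : 1 ≤ γ)
    (𝒱 : Set (Finset α))
    (hsize : ∀ V ∈ 𝒱, V.card ≤ γ)
    (hconn : ∀ V ∈ 𝒱, (G.induce (↑V : Set α)).Connected)
    (p : ℝ) (hp : 0 < p)
    (B : Finset α)
    (hB : ∀ v ∈ B, ∃ 𝒟 : Finset (Finset α), ↑𝒟 ⊆ 𝒱 ∧
      ⌈((1 + p) / p) * (wcol G σ (2 * γ) : ℝ)⌉₊ ≤ 𝒟.card ∧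
      (∀ A ∈ 𝒟, ∀ A' ∈ 𝒟, A ≠ A' → Disjoint A A') ∧
      ∀ V ∈ 𝒟, Witnesses G σ γ v V) :
    (B.card : ℝ) ≤ p * (tau 𝒱 : ℝ) := by
  classical
  set w := wcol G σ (2 * γ) with hwdef
  have hwr : ∀ v, (WR G σ (2 * γ) v).ncard ≤ w := fun v =>
    Finset.le_sup (f := fun v => (WR G σ (2 * γ) v).ncard) (Finset.mem_univ v)
  have hne : {n | ∃ S : Finset α, (∀ V ∈ 𝒱, (S ∩ V).Nonempty) ∧ S.card = n}.Nonempty := by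
    refine ⟨_, Finset.univ, fun V hV => ?_, rfl⟩
    obtain ⟨a⟩ := (hconn V hV).nonempty
    exact ⟨a.1, by simpa using a.2⟩
  obtain ⟨S, hS, hScard⟩ := Nat.sInf_mem hne
  change S.card = tau 𝒱 at hScard
  rw [← hScard]
  rcases B.eq_empty_or_nonempty with rfl | ⟨b, hb⟩
  · simp only [Finset.card_empty, Nat.cast_zero]; positivity
  have hwpos : 0 < w := by
    refine lt_of_lt_of_le ?_ (hwr b)
    rw [Set.ncard_pos]
    exact ⟨b, SimpleGraph.Walk.nil, by simp, by
      intro x hx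
      rw [SimpleGraph.Walk.support_nil, List.mem_singleton] at hx
      subst hx; exact σ.le_refl _⟩
  have key : ∀ v ∈ B, (w : ℝ) / p ≤ ((S.filter fun s => v ∈ WR G σ (2 * γ) s).card : ℝ) := by
    intro v hv
    obtain ⟨D, hDV, hDc, hDd, hDw⟩ := hB v hv
    have hex : ∀ V ∈ D, ∃ x ∈ V, x ∈ (S.filter fun s => v ∈ WR G σ (2 * γ) s) ∪
        (WR G σ (2 * γ) v).toFinset := by
      intro V hV
      obtain ⟨s, hs⟩ := hS V (hDV hV)
      rw [Finset.mem_inter] at hs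
      rcases aux_wit G σ γ V (hsize V (hDV hV)) (hconn V (hDV hV)) v s hs.2 (hDw V hV)
        with h | ⟨m, hm, h⟩
      · exact ⟨s, hs.2, by simp [hs.1, h]⟩
      · exact ⟨m, hm, by simp [h]⟩
    haveI : Nonempty α := ⟨v⟩
    choose! f hf1 hf2 using hex
    have hc := Finset.card_le_card_of_injOn f hf2 (by
      intro A hA A' hA' he
      by_contra hAA
      exact Finset.disjoint_left.1 (hDd A hA A' hA' hAA) (hf1 A hA) (he ▸ hf1 A' hA'))
    have hc2 := hc.trans (Finset.card_union_le _ _)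
    have h5 := hwr v
    rw [Set.ncard_eq_toFinset_card'] at h5
    have h6 : ⌈((1 + p) / p) * (w : ℝ)⌉₊ ≤
      (S.filter fun s => v ∈ WR G σ (2 * γ) s).card + w := by omega
    have h7 := Nat.ceil_le.1 h6
    push_cast at h7
    have h8 : ((1 + p) / p) * (w : ℝ) = w / p + w := by field_simp
    linarith
  have hdc : ∑ v ∈ B, (S.filter fun s => v ∈ WR G σ (2 * γ) s).card =
      ∑ s ∈ S, (B.filter fun v => v ∈ WR G σ (2 * γ) s).card :=
    Finset.sum_card_bipartiteAbove_eq_sum_card_bipartiteBelow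
      (fun v s => v ∈ WR G σ (2 * γ) s)
  have hup : ∑ s ∈ S, (B.filter fun v => v ∈ WR G σ (2 * γ) s).card ≤ S.card * w := by
    refine Finset.sum_le_card_nsmul _ _ _ fun s _ => le_trans ?_ (hwr s)
    rw [Set.ncard_eq_toFinset_card']
    exact Finset.card_le_card fun x hx => by simpa using (Finset.mem_filter.1 hx).2
  have hlow := Finset.card_nsmul_le_sum B _ _ key
  rw [← Nat.cast_sum, hdc, nsmul_eq_mul] at hlow
  have hup' : ((∑ s ∈ S, (B.filter fun v => v ∈ WR G σ (2 * γ) s).card : ℕ) : ℝ) ≤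
    S.card * w := by exact_mod_cast hup
  have h9 := hlow.trans hup'
  have hw' : (0 : ℝ) < w := by exact_mod_cast hwpos
  rw [← mul_div_assoc, div_le_iff₀ hp] at h9
  refine le_of_mul_le_mul_right ?_ hw'
  linarith
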